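/- Let 𝒳 be a complete separable metric space and let {μ_m}_{m∈ℕ} be a sequence of Borel probability measures on 𝒳 with the following property: for every ε > 0 there exists a compact set K_ε ⊂ 𝒳 such that for every α > 0 there exists M > 0 such that for all m ≥ M, μ_m(K_ε^α) ≥ 1−ε. Then the sequence {μ_m} is tight, i.e., for every ε > 0 there exists a compact set K ⊂ 𝒳 with μ_m(K) ≥ 1−ε for all m. -/

import Mathlib

open MeasureTheory Metric Set

/-!
For every radius `δ > 0` and mass `η > 0` there is one compact set `C` such that every `μ m`
gives at most mass `η` to the complement of the `δ`-thickening of `C`: the hypothesis handles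
all `m ≥ M`, and the finitely many remaining measures form a tight family because each Borel
probability measure on a complete separable metric space is tight
(`exists_isCompact_measure_compl_thickening_le`). Applying this with radii `δ n = 1 / (n + 1)`
and masses `η n` of sum less than `ε`, the set `⋂ n, cthickening (δ n) (C n)` is closed and
totally bounded, hence compact (`isCompact_iInter_cthickening`), and countable subadditivity
bounds the mass of its complement by `ε`.
-/

lemma isTightMeasureSet_image_Iio {X : Type*} [MetricSpace X] [CompleteSpace X]
    [TopologicalSpace.SeparableSpace X] [MeasurableSpace X] [BorelSpace X]
    (μ : ℕ → Measure X) [∀ m, IsProbabilityMeasure (μ m)] (M : ℕ) :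
    IsTightMeasureSet (μ '' Set.Iio M) := by
  have : SecondCountableTopology X := UniformSpace.secondCountable_of_separable X
  induction M with
  | zero =>
    exact (isTightMeasureSet_singleton (μ := μ 0)).subset (by simp)
  | succ M ih =>
    refine (ih.union (isTightMeasureSet_singleton (μ := μ M))).subset ?_
    rintro _ ⟨m, hm, rfl⟩
    rcases Nat.lt_succ_iff_lt_or_eq.mp hm with hlt | rfl
    · exact Or.inl ⟨m, hlt, rfl⟩
    · exact Or.inr rfl

/-- If the measures `μ m` with `m` large charge every thickening of a fixed compact set with mass
at least `1 - η`, then for each radius `δ` the compact set can be enlarged so that the bound for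
radius `δ` holds for all `m`. The enlarged set depends on `δ`. -/
lemma exists_isCompact_measure_compl_thickening_le {X : Type*} [MetricSpace X] [CompleteSpace X]
    [TopologicalSpace.SeparableSpace X] [MeasurableSpace X] [BorelSpace X]
    (μ : ℕ → Measure X) [∀ m, IsProbabilityMeasure (μ m)] {η : ENNReal} (hη : 0 < η)
    (h : ∃ K : Set X, IsCompact K ∧ ∀ α : ℝ, 0 < α → ∃ M : ℕ, ∀ m ≥ M,
      1 - η ≤ μ m (thickening α K)) {δ : ℝ} (hδ : 0 < δ) :
    ∃ C : Set X, IsCompact C ∧ ∀ m, μ m (thickening δ C)ᶜ ≤ η := by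
  obtain ⟨K, hK, hKα⟩ := h
  obtain ⟨M, hM⟩ := hKα δ hδ
  obtain ⟨L, hL, hLM⟩ := isTightMeasureSet_iff_exists_isCompact_measure_compl_le.mp
    (isTightMeasureSet_image_Iio μ M) η hη
  refine ⟨K ∪ L, hK.union hL, fun m => ?_⟩
  rcases lt_or_ge m M with hm | hm
  · refine le_trans (measure_mono (compl_subset_compl.mpr ?_)) (hLM _ ⟨m, hm, rfl⟩)
    exact subset_union_right.trans (self_subset_thickening hδ _)
  · refine le_trans (measure_mono (compl_subset_compl.mpr
      (thickening_subset_of_subset δ subset_union_left))) ?_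
    rw [prob_compl_eq_one_sub isOpen_thickening.measurableSet]
    exact tsub_le_iff_tsub_le.mp (hM m hm)

lemma isCompact_iInter_cthickening {X : Type*} [MetricSpace X] [CompleteSpace X]
    {C : ℕ → Set X} (hC : ∀ n, IsCompact (C n)) :
    IsCompact (⋂ n : ℕ, cthickening (1 / ((n : ℝ) + 1)) (C n)) := by
  refine TotallyBounded.isCompact_of_isClosed ?_ (isClosed_iInter fun n => isClosed_cthickening)
  rw [Metric.totallyBounded_iff]
  intro r hr
  obtain ⟨n, hn⟩ := exists_nat_one_div_lt (half_pos hr)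
  obtain ⟨t, ht, hCt⟩ := Metric.totallyBounded_iff.mp (hC n).totallyBounded (r / 2) (half_pos hr)
  refine ⟨t, ht, fun x hx => ?_⟩
  obtain ⟨z, hz, hxz⟩ := mem_thickening_iff.mp
    (cthickening_subset_thickening' (half_pos hr) hn _ (mem_iInter.mp hx n))
  obtain ⟨y, hy, hzy⟩ := mem_iUnion₂.mp (hCt hz)
  refine mem_iUnion₂.mpr ⟨y, hy, ?_⟩
  rw [mem_ball] at hzy ⊢
  linarith [dist_triangle x z y]

/-- Let `𝒳` be a complete separable metric space and `{μ_m}` a sequence of Borel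
probability measures on `𝒳` such that: for every `ε > 0` there exists a compact set
`K_ε ⊆ 𝒳` such that for every `α > 0` there exists `M` such that for all `m ≥ M`,
`μ_m(K_ε^α) ≥ 1 − ε`, where `K^α` is the open `α`-neighborhood of `K`.  Then `{μ_m}` is
tight: for every `ε > 0` there is a compact `K ⊆ 𝒳` with `μ_m(K) ≥ 1 − ε` for all `m`. -/
theorem tightness_from_thickened_compacts
    {𝒳 : Type*} [MetricSpace 𝒳] [CompleteSpace 𝒳] [TopologicalSpace.SeparableSpace 𝒳]
    [MeasurableSpace 𝒳] [BorelSpace 𝒳]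
    (μ : ℕ → Measure 𝒳) (hprob : ∀ m, IsProbabilityMeasure (μ m))
    (h : ∀ ε : ℝ, 0 < ε → ∃ K : Set 𝒳, IsCompact K ∧
      ∀ α : ℝ, 0 < α → ∃ M : ℕ, ∀ m ≥ M,
        1 - ENNReal.ofReal ε ≤ μ m (Metric.thickening α K)) :
    ∀ ε : ℝ, 0 < ε → ∃ K : Set 𝒳, IsCompact K ∧ ∀ m, 1 - ENNReal.ofReal ε ≤ μ m K := by
  intro ε hε
  obtain ⟨η, hη, hsum⟩ := ENNReal.exists_pos_sum_of_countable
    (ENNReal.ofReal_pos.mpr hε).ne' ℕ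
  have hex : ∀ n : ℕ, ∃ C : Set 𝒳, IsCompact C ∧
      ∀ m, μ m (thickening (1 / ((n : ℝ) + 1)) C)ᶜ ≤ η n := fun n =>
    exists_isCompact_measure_compl_thickening_le μ (ENNReal.coe_pos.mpr (hη n))
      (by simpa only [ENNReal.ofReal_coe_nnreal] using h (η n) (hη n)) Nat.one_div_pos_of_nat
  choose C hC hCμ using hex
  have hcompact := isCompact_iInter_cthickening hC
  refine ⟨_, hcompact, fun m => ?_⟩
  rw [tsub_le_iff_tsub_le, ← prob_compl_eq_one_sub hcompact.measurableSet, compl_iInter]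
  calc μ m (⋃ n : ℕ, (cthickening (1 / ((n : ℝ) + 1)) (C n))ᶜ)
      ≤ ∑' n : ℕ, μ m (cthickening (1 / ((n : ℝ) + 1)) (C n))ᶜ := measure_iUnion_le _
    _ ≤ ∑' n : ℕ, (η n : ENNReal) := ENNReal.tsum_le_tsum fun n =>
        (measure_mono (compl_subset_compl.mpr (thickening_subset_cthickening _ _))).trans
          (hCμ n m)
    _ ≤ ENNReal.ofReal ε := hsum.le
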